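/- Let σ ∈ (0,√2), T₀ > 2 large enough, and let ℓ ≥ 0 be an integer. There exists a constant C > 0 such that for all t ≤ −T₀: ∫_1^∞ r^ℓ Φ(t,r) dr ≤ C ∑_{i=1}^k (ρ_i^0(t))^ℓ (log|t|/|t|)^{σ/(2√2)}, and for every j = 1,…,k: ∫_1^∞ r^ℓ Φ(t,r) w′(r − ρ_j(t)) dr ≤ C (ρ_j^0(t))^ℓ (log|t|/|t|)^{σ/√2}. -/

import Mathlib

open Real MeasureTheory

noncomputable section

/-- The heteroclinic profile `w(s) = tanh(s/√2)`. -/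
def w (s : ℝ) : ℝ := Real.tanh (s / Real.sqrt 2)

/-- `w' `. -/
def w1 (s : ℝ) : ℝ := deriv w s

/-- `w''`. -/
def w2 (s : ℝ) : ℝ := deriv w1 s

/-- The Allen–Cahn nonlinearity `f(v) = v(1-v²)`. -/
def f (v : ℝ) : ℝ := v * (1 - v ^ 2)

/-- `f'`. -/
def f1 (v : ℝ) : ℝ := deriv f v

/-- The interaction constant `β`. -/
def β : ℝ :=
  (6 * ∫ x : ℝ, Real.exp (Real.sqrt 2 * x) * (1 - w x ^ 2) * w1 x) / ∫ x : ℝ, w1 x ^ 2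

/-- `r(y) = (1+y²)^{1/(2(N-1))}`. -/
def Rr (N : ℕ) (y : ℝ) : ℝ := (1 + y ^ 2) ^ ((1 : ℝ) / (2 * ((N : ℝ) - 1)))

/-- `b_l = -(1/√2) log((k-l)l/(2β))`. -/
def bco (k l : ℕ) : ℝ :=
  -(1 / Real.sqrt 2) * Real.log (((k : ℝ) - (l : ℝ)) * (l : ℝ) / (2 * β))

/-- `ρ⁰_j(t) = √(-2(N-1)t) + (j-(k+1)/2) η(t) + γ_j`. -/
def rho0 (N k : ℕ) (η : ℝ → ℝ) (γ : ℕ → ℝ) (j : ℕ) (t : ℝ) : ℝ :=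
  Real.sqrt (-2 * ((N : ℝ) - 1) * t) + ((j : ℝ) - ((k : ℝ) + 1) / 2) * η t + γ j

/-- `ρ_j = ρ⁰_j + h_j`. -/
def rho (N k : ℕ) (η : ℝ → ℝ) (γ : ℕ → ℝ) (h : ℕ → ℝ → ℝ) (j : ℕ) (t : ℝ) : ℝ :=
  rho0 N k η γ j t + h j t

/-- `z(t,r) = ∑_{j=1}^k (-1)^{j+1} w(r-ρ_j(t)) - 1`. -/
def zfun (N k : ℕ) (η : ℝ → ℝ) (γ : ℕ → ℝ) (h : ℕ → ℝ → ℝ) (t r : ℝ) : ℝ :=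
  (∑ j ∈ Finset.Icc 1 k, (-1 : ℝ) ^ (j + 1) * w (r - rho N k η γ h j t)) - 1

/-- The standing assumptions: `N ≥ 2`, `k ≥ 2` even, `η` solves the simple ODE with `η(-1)=0`,
and `γ` is defined through the constants `b_l`. -/
structure Setting (N k : ℕ) (η : ℝ → ℝ) (γ : ℕ → ℝ) : Prop where
  hN : 2 ≤ N
  hk : 2 ≤ k
  hkeven : Even k
  hηdiff : ∀ t ≤ (-1 : ℝ), DifferentiableAt ℝ η t
  hηode : ∀ t ≤ (-1 : ℝ),
    deriv η t + η t / (2 * t) + β * Real.exp (-Real.sqrt 2 * η t) = 0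
  hηinit : η (-1) = 0
  hγ : ∀ j : ℕ, 1 ≤ j → j ≤ k / 2 →
    γ j = -(1 / 2) * (∑ i ∈ Finset.Icc j (k - j), bco k i) ∧
    γ (k - j + 1) = (1 / 2) * (∑ i ∈ Finset.Icc j (k - j), bco k i)

/-- `h = (h_1,…,h_k)` is C¹ on `(-∞,-T]` with
`sup_{t≤-T}|h(t)| + sup_{t≤-T}(|t|/log|t|)|h'(t)| < 1`. -/
def SmallH (k : ℕ) (T : ℝ) (h : ℕ → ℝ → ℝ) : Prop :=
  (∀ j ∈ Finset.Icc 1 k, ∀ t ≤ -T, DifferentiableAt ℝ (h j) t) ∧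
  ∃ A B : ℝ, A + B < 1 ∧
    (∀ j ∈ Finset.Icc 1 k, ∀ t ≤ -T, |h j t| ≤ A) ∧
    (∀ j ∈ Finset.Icc 1 k, ∀ t ≤ -T, |t| / Real.log |t| * |deriv (h j) t| ≤ B)

/-- The weight `Φ(t,r)`, defined piecewise (with the convention `ρ⁰_{k+1} = +∞`). -/
def IsPhi (N k : ℕ) (η : ℝ → ℝ) (γ : ℕ → ℝ) (σ : ℝ) (Φ : ℝ → ℝ → ℝ) : Prop :=
  (∀ t r : ℝ, 1 < r → r ≤ (rho0 N k η γ 1 t + rho0 N k η γ 2 t) / 2 →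
      Φ t r = Real.exp (σ * (r - rho0 N k η γ 2 t))) ∧
  (∀ t r : ℝ, ∀ j : ℕ, 2 ≤ j → j < k →
      (rho0 N k η γ j t + rho0 N k η γ (j - 1) t) / 2 < r →
      r ≤ (rho0 N k η γ j t + rho0 N k η γ (j + 1) t) / 2 →
      Φ t r = Real.exp (σ * (-r + rho0 N k η γ (j - 1) t)) +
        Real.exp (σ * (r - rho0 N k η γ (j + 1) t))) ∧
  (∀ t r : ℝ, (rho0 N k η γ k t + rho0 N k η γ (k - 1) t) / 2 < r →
      Φ t r = Real.exp (σ * (-r + rho0 N k η γ (k - 1) t)))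

/-- The error term `E`. -/
def Eterm (N k : ℕ) (η : ℝ → ℝ) (γ : ℕ → ℝ) (h : ℕ → ℝ → ℝ) (t y : ℝ) : ℝ :=
  (∑ i ∈ Finset.Icc 1 k, (-1 : ℝ) ^ (i + 1) *
    (w1 (Rr N y - rho N k η γ h i t) * (deriv (rho N k η γ h i) t + ((N : ℝ) - 1) / Rr N y)
      - f (w (Rr N y - rho N k η γ h i t))
      - w2 (Rr N y - rho N k η γ h i t) / (1 + y ^ 2))) +
  f (zfun N k η γ h t (Rr N y))

/-- The set of values `|u|/Φ` over `I × (0,∞)`. -/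
def CSet (N : ℕ) (Φ : ℝ → ℝ → ℝ) (I : Set ℝ) (u : ℝ → ℝ → ℝ) : Set ℝ :=
  (fun p : ℝ × ℝ => |u p.1 p.2| / Φ p.1 (Rr N p.2)) '' (I ×ˢ Set.Ioi (0 : ℝ))

/-- The norm `‖u‖_{C_Φ(I×(0,∞))}`. -/
def CNorm (N : ℕ) (Φ : ℝ → ℝ → ℝ) (I : Set ℝ) (u : ℝ → ℝ → ℝ) : ℝ :=
  sSup (CSet N Φ I u)

/-- The divergence form elliptic operator `L`. -/
def Lop (N : ℕ) (v : ℝ → ℝ → ℝ) (t y : ℝ) : ℝ :=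
  ((N : ℝ) - 1) ^ 2 * (y ^ 2 + 1) ^ (-(1 : ℝ) / (2 * ((N : ℝ) - 1))) *
    deriv (fun s => (s ^ 2 + 1) ^ ((2 * (N : ℝ) - 3) / (2 * ((N : ℝ) - 1))) * deriv (v t) s) y

/-- `d = (d_1,…,d_k)` solves, at time `t`, the (nearly diagonal) projection system associated to
`ψ`, the profile locations `ρ`, the profile `z` and the forcing `g`. -/
def ProjSystem (N k : ℕ) (ρ : ℕ → ℝ → ℝ) (z : ℝ → ℝ → ℝ) (ψ g : ℝ → ℝ → ℝ)
    (d : ℕ → ℝ → ℝ) (t : ℝ) : Prop :=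
  ∀ j ∈ Finset.Icc 1 k,
    (∑ i ∈ Finset.Icc 1 k, d i t * ∫ y in Set.Ioi (0 : ℝ),
        w1 (Rr N y - ρ i t) * w1 (Rr N y - ρ j t) * Rr N y) =
      -deriv (ρ j) t * (∫ y in Set.Ioi (0 : ℝ), ψ t y * w2 (Rr N y - ρ j t) * Rr N y) +
      ((N : ℝ) - 1) *
        (∫ y in Set.Ioi (0 : ℝ), ψ t y * deriv (fun s => w2 (Rr N s - ρ j t) * s) y) +
      (∫ y in Set.Ioi (0 : ℝ), f1 (z t (Rr N y)) * ψ t y * w1 (Rr N y - ρ j t) * Rr N y) +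
      (∫ y in Set.Ioi (0 : ℝ), g t y * w1 (Rr N y - ρ j t) * Rr N y)

/-- The orthogonality conditions at time `t`. -/
def Orth (N k : ℕ) (ρ : ℕ → ℝ → ℝ) (ψ : ℝ → ℝ → ℝ) (t : ℝ) : Prop :=
  ∀ i ∈ Finset.Icc 1 k, (∫ y in Set.Ioi (0 : ℝ), ψ t y * w1 (Rr N y - ρ i t) * Rr N y) = 0

/-- The nonlinear term `N(ψ,h)`. -/
def Nterm (N k : ℕ) (η : ℝ → ℝ) (γ : ℕ → ℝ) (h : ℕ → ℝ → ℝ) (ψ : ℝ → ℝ → ℝ) (t y : ℝ) : ℝ :=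
  f (zfun N k η γ h t (Rr N y) + ψ t y) - f (zfun N k η γ h t (Rr N y)) -
    f1 (zfun N k η γ h t (Rr N y)) * ψ t y

/-- The norm `‖h‖_Λ = sup_{t≤-T}|h(t)| + sup_{t≤-T}(|t|/log|t|)|h'(t)|`
(with the sup norm on vectors). -/
def LamNorm (k : ℕ) (T : ℝ) (h : ℕ → ℝ → ℝ) : ℝ :=
  sSup {a : ℝ | ∃ j ∈ Finset.Icc 1 k, ∃ t ≤ -T, a = |h j t|} +
  sSup {a : ℝ | ∃ j ∈ Finset.Icc 1 k, ∃ t ≤ -T, a = |t| / Real.log |t| * |deriv (h j) t|}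

end

/-!
With `s = -t` and `u(s) = e^{√2 η(-s)}`, the equation of `η` reads `u' = √2 β - u log u / (2s)`,
`u(1) = 1`. Comparing `u` with the barriers `1`, `1 + √2 β (s - 1)` and `c s / log s` shows that
`e^{-√2 η(t)} ≲ log|t| / |t|` and `η(t) = o(√|t|)`. For large `|t|` the interfaces `ρ_i⁰(t)`
therefore lie in `[1, ∞)` and are increasing, with consecutive gaps `η(t) + O(1)`.

Every exponential in `Φ` equals `e^{-σ max(|r - ρ_i⁰|, |r - ρ_{i+1}⁰|)}` on the half of the gap
where it is used. The maximum is half the gap plus the distance of `r` to the midpoint, so `Φ` is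
at most a sum of exponentials of height about `e^{-σ η / 2}` centred at the midpoints; this is the
first estimate. The maximum is also at least the gap minus `|r - ρ_j⁰|`, so
`Φ ≲ e^{-σ η} e^{σ |r - ρ_j⁰|}`, and the factor `w' ≲ e^{-√2 |r - ρ_j⁰|}` absorbs the growth because
`σ < √2`; this doubles the exponent in the second estimate.
-/

open Filter Topology Asymptotics

section Profile

lemma w1_eq_inv (x : ℝ) : w1 x = (√2 * cosh (x / √2) ^ 2)⁻¹ := by
  have hlin : HasDerivAt (fun s : ℝ => s / √2) (1 / √2) x := (hasDerivAt_id x).div_const _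
  have hw : w = (fun s => sinh (s / √2)) / fun s => cosh (s / √2) :=
    funext fun s => Real.tanh_eq_sinh_div_cosh _
  rw [w1, hw, (hlin.sinh.div hlin.cosh (cosh_pos _).ne').deriv]
  field_simp
  linarith [cosh_sq (x / √2)]

lemma one_sub_w_sq (x : ℝ) : 1 - w x ^ 2 = √2 * w1 x := by
  have := (cosh_pos (x / √2)).ne'
  rw [w, Real.tanh_eq_sinh_div_cosh, w1_eq_inv]
  field_simp
  linarith [cosh_sq (x / √2)]

lemma w1_pos (x : ℝ) : 0 < w1 x := by
  have := cosh_pos (x / √2)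
  rw [w1_eq_inv]
  positivity

lemma continuous_w1 : Continuous w1 := by
  rw [funext w1_eq_inv]
  refine Continuous.inv₀ (by fun_prop) fun x => ?_
  have := cosh_pos (x / √2)
  positivity

lemma exp_abs_le_two_mul_cosh (x : ℝ) : exp |x| ≤ 2 * cosh x := by
  rw [← cosh_abs, cosh_eq]
  linarith [exp_pos (-|x|)]

lemma w1_le_exp (x : ℝ) : w1 x ≤ 4 * exp (-(√2 * |x|)) := by
  have hsq : exp (√2 * |x|) = exp |x / √2| ^ 2 := by
    rw [← exp_nat_mul, abs_div, abs_of_pos (a := √2) (by positivity)]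
    congr 1
    field_simp
    norm_num [mul_comm]
  have hcosh : exp (√2 * |x|) / 4 ≤ √2 * cosh (x / √2) ^ 2 :=
    calc exp (√2 * |x|) / 4 ≤ (2 * cosh (x / √2)) ^ 2 / 4 := by
          rw [hsq]
          gcongr
          exact exp_abs_le_two_mul_cosh _
      _ = 1 * cosh (x / √2) ^ 2 := by ring
      _ ≤ √2 * cosh (x / √2) ^ 2 := by
          gcongr
          exact one_le_sqrt.mpr one_le_two
  calc w1 x ≤ (exp (√2 * |x|) / 4)⁻¹ := by
        rw [w1_eq_inv]
        gcongr
    _ = 4 * exp (-(√2 * |x|)) := by rw [inv_div, exp_neg, div_eq_mul_inv]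

lemma w1_sub_le_exp {y A : ℝ} (hy : |y| ≤ A) (x : ℝ) :
    w1 (x - y) ≤ 4 * exp (√2 * A) * exp (-(√2 * |x|)) := by
  have habs : |x| - A ≤ |x - y| := (sub_le_sub_left hy _).trans (abs_sub_abs_le_abs_sub x y)
  calc w1 (x - y) ≤ 4 * exp (-(√2 * |x - y|)) := w1_le_exp _
    _ ≤ 4 * exp (-(√2 * (|x| - A))) := by gcongr
    _ = 4 * exp (√2 * A) * exp (-(√2 * |x|)) := by
        rw [mul_assoc, ← exp_add]
        ring_nf

end Profile

section ExponentialMoments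

variable {δ : ℝ}

lemma integrable_one_add_abs_pow_mul_exp_neg (hδ : 0 < δ) (ℓ : ℕ) :
    Integrable fun x : ℝ => (1 + |x|) ^ ℓ * exp (-(δ * |x|)) := by
  have hcont : Continuous fun x : ℝ => (1 + |x|) ^ ℓ * exp (-(δ * |x|)) := by fun_prop
  have hpow : (fun x : ℝ => (1 + x) ^ ℓ) =O[atTop] fun x => exp (δ / 2 * (1 + x)) :=
    ((isLittleO_pow_exp_pos_mul_atTop ℓ (half_pos hδ)).comp_tendsto
      (tendsto_atTop_add_const_left _ 1 tendsto_id)).isBigO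
  have hexp : (fun x : ℝ => exp (δ / 2 * (1 + x)) * exp (-(δ * x))) =
      fun x => exp (δ / 2) * exp (-(δ / 2) * x) := by
    funext x
    rw [← exp_add, ← exp_add]
    ring_nf
  refine hcont.locallyIntegrable.integrable_of_isBigO_atTop_of_norm_isNegInvariant
    (g := fun x => exp (-(δ / 2) * x)) (ae_of_all _ fun x => by simp) ?_
    ⟨Set.Ioi 0, Ioi_mem_atTop 0, exp_neg_integrableOn_Ioi 0 (half_pos hδ)⟩
  refine ((hpow.mul (isBigO_refl _ _)).congr' ?_ hexp.eventuallyEq).trans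
    (isBigO_const_mul_self _ _ _)
  filter_upwards [eventually_ge_atTop 0] with x hx
  rw [abs_of_nonneg hx]

lemma integral_pos_of_le_mul_exp_neg_abs (hδ : 0 < δ) {g : ℝ → ℝ} (hg : Continuous g)
    (hpos : ∀ x, 0 < g x) {K : ℝ} (hle : ∀ x, g x ≤ K * exp (-(δ * |x|))) : 0 < ∫ x, g x := by
  have hexp : Integrable fun x : ℝ => exp (-(δ * |x|)) := by
    simpa using integrable_one_add_abs_pow_mul_exp_neg hδ 0
  have hint : Integrable g := (hexp.const_mul K).mono' hg.aestronglyMeasurable <|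
    ae_of_all _ fun x => (norm_of_nonneg (hpos x).le).trans_le (hle x)
  exact integral_pos_of_integrable_nonneg_nonzero hg hint (fun x => (hpos x).le) (hpos 0).ne'

/-- The moment `∫ (1 + |x|)^ℓ e^{-δ|x|} dx` of the two-sided exponential weight: the constant in the
bounds for weighted integrals of `r^ℓ`, which grow like `m^ℓ` when the weight is centred at `m`. -/
noncomputable def expMoment (δ : ℝ) (ℓ : ℕ) : ℝ := ∫ x : ℝ, (1 + |x|) ^ ℓ * exp (-(δ * |x|))

lemma expMoment_nonneg (δ : ℝ) (ℓ : ℕ) : 0 ≤ expMoment δ ℓ :=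
  integral_nonneg fun x => by positivity

lemma abs_pow_mul_exp_neg_le {m : ℝ} (hm : 1 ≤ m) (δ : ℝ) (ℓ : ℕ) (r : ℝ) :
    |r| ^ ℓ * exp (-(δ * |r - m|)) ≤ m ^ ℓ * ((1 + |r - m|) ^ ℓ * exp (-(δ * |r - m|))) := by
  have hr : |r| ≤ m * (1 + |r - m|) :=
    calc |r| ≤ m + |r - m| := by
          simpa [abs_of_pos (zero_lt_one.trans_le hm)] using abs_add_le m (r - m)
      _ ≤ m * (1 + |r - m|) := by nlinarith [abs_nonneg (r - m)]
  rw [← mul_assoc, ← mul_pow]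
  gcongr

lemma integrable_abs_pow_mul_exp_neg (hδ : 0 < δ) {m : ℝ} (hm : 1 ≤ m) (ℓ : ℕ) :
    Integrable fun r : ℝ => |r| ^ ℓ * exp (-(δ * |r - m|)) :=
  (((integrable_one_add_abs_pow_mul_exp_neg hδ ℓ).comp_sub_right m).const_mul (m ^ ℓ)).mono'
    (by fun_prop) <| ae_of_all _ fun r =>
      (norm_of_nonneg (by positivity)).trans_le (abs_pow_mul_exp_neg_le hm δ ℓ r)

lemma integral_abs_pow_mul_exp_neg_le (hδ : 0 < δ) {m : ℝ} (hm : 1 ≤ m) (ℓ : ℕ) :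
    ∫ r : ℝ, |r| ^ ℓ * exp (-(δ * |r - m|)) ≤ expMoment δ ℓ * m ^ ℓ :=
  calc ∫ r : ℝ, |r| ^ ℓ * exp (-(δ * |r - m|))
      ≤ ∫ r : ℝ, m ^ ℓ * ((1 + |r - m|) ^ ℓ * exp (-(δ * |r - m|))) :=
        integral_mono (integrable_abs_pow_mul_exp_neg hδ hm ℓ)
          (((integrable_one_add_abs_pow_mul_exp_neg hδ ℓ).comp_sub_right m).const_mul _)
          (abs_pow_mul_exp_neg_le hm δ ℓ)
    _ = expMoment δ ℓ * m ^ ℓ := by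
        rw [integral_const_mul, mul_comm, expMoment,
          integral_sub_right_eq_self (fun x : ℝ => (1 + |x|) ^ ℓ * exp (-(δ * |x|))) m]

lemma setIntegral_pow_mul_le_of_le_sum_exp (hδ : 0 < δ) {A : Set ℝ} (hA : MeasurableSet A)
    (hA0 : ∀ r ∈ A, 0 ≤ r) {ι : Type*} {s : Finset ι} {E m : ι → ℝ} (hE : ∀ i ∈ s, 0 ≤ E i)
    (hm : ∀ i ∈ s, 1 ≤ m i) {φ : ℝ → ℝ}
    (hφ : ∀ r ∈ A, φ r ∈ Set.Icc 0 (∑ i ∈ s, E i * exp (-(δ * |r - m i|)))) (ℓ : ℕ) :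
    ∫ r in A, r ^ ℓ * φ r ≤ expMoment δ ℓ * ∑ i ∈ s, E i * m i ^ ℓ := by
  have hint : ∀ i ∈ s, Integrable fun r : ℝ => E i * (|r| ^ ℓ * exp (-(δ * |r - m i|))) :=
    fun i hi => (integrable_abs_pow_mul_exp_neg hδ (hm i hi) ℓ).const_mul (E i)
  calc ∫ r in A, r ^ ℓ * φ r
      ≤ ∫ r in A, ∑ i ∈ s, E i * (|r| ^ ℓ * exp (-(δ * |r - m i|))) := by
        refine integral_mono_of_nonneg
          (ae_restrict_of_forall_mem hA fun r hr =>
            mul_nonneg (pow_nonneg (hA0 r hr) ℓ) (hφ r hr).1)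
          (integrable_finsetSum s hint).integrableOn
          (ae_restrict_of_forall_mem hA fun r hr => ?_)
        simp only [abs_of_nonneg (hA0 r hr), mul_left_comm (E _), ← Finset.mul_sum]
        exact mul_le_mul_of_nonneg_left (hφ r hr).2 (pow_nonneg (hA0 r hr) ℓ)
    _ ≤ ∫ r : ℝ, ∑ i ∈ s, E i * (|r| ^ ℓ * exp (-(δ * |r - m i|))) :=
        setIntegral_le_integral (integrable_finsetSum s hint) <| ae_of_all _ fun r =>
          Finset.sum_nonneg fun i hi => mul_nonneg (hE i hi) (by positivity)
    _ = ∑ i ∈ s, E i * ∫ r : ℝ, |r| ^ ℓ * exp (-(δ * |r - m i|)) := by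
        simp only [integral_finsetSum s hint, integral_const_mul]
    _ ≤ ∑ i ∈ s, E i * (expMoment δ ℓ * m i ^ ℓ) := Finset.sum_le_sum fun i hi =>
        mul_le_mul_of_nonneg_left (integral_abs_pow_mul_exp_neg_le hδ (hm i hi) ℓ) (hE i hi)
    _ = expMoment δ ℓ * ∑ i ∈ s, E i * m i ^ ℓ := by
        simp only [Finset.mul_sum, mul_left_comm]

end ExponentialMoments

lemma β_pos : 0 < β := by
  have hnum (x : ℝ) : exp (√2 * x) * (1 - w x ^ 2) * w1 x ≤ √2 * 16 * exp (-(√2 * |x|)) :=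
    calc exp (√2 * x) * (1 - w x ^ 2) * w1 x = √2 * (exp (√2 * x) * w1 x ^ 2) := by
          rw [one_sub_w_sq]
          ring
      _ ≤ √2 * (exp (√2 * |x|) * (4 * exp (-(√2 * |x|))) ^ 2) := by
          gcongr
          exacts [le_abs_self x, (w1_pos x).le, w1_le_exp x]
      _ = √2 * 16 * (exp (√2 * |x| + -(√2 * |x|)) * exp (-(√2 * |x|))) := by
          rw [exp_add]
          ring
      _ = √2 * 16 * exp (-(√2 * |x|)) := by simp
  have hden (x : ℝ) : w1 x ^ 2 ≤ 16 * exp (-(2 * √2 * |x|)) :=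
    calc w1 x ^ 2 ≤ (4 * exp (-(√2 * |x|))) ^ 2 := by
          gcongr
          exacts [(w1_pos x).le, w1_le_exp x]
      _ = 16 * exp (-(2 * √2 * |x|)) := by
          rw [mul_pow, ← exp_nat_mul]
          push_cast
          ring_nf
  refine div_pos (mul_pos (by norm_num)
    (integral_pos_of_le_mul_exp_neg_abs (by positivity) ?_ (fun x => ?_) hnum))
    (integral_pos_of_le_mul_exp_neg_abs (by positivity) (continuous_w1.pow 2)
      (fun x => pow_pos (w1_pos x) 2) hden)
  · simp only [one_sub_w_sq]
    have := continuous_w1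
    fun_prop
  · rw [one_sub_w_sq]
    have := w1_pos x
    positivity

section GapODE

variable {b : ℝ} {η : ℝ → ℝ} {s : ℝ}

lemma hasDerivAt_mul_div_log (c : ℝ) {x : ℝ} (hx : 1 < x) :
    HasDerivAt (fun x => c * (x / log x)) (c * ((log x - 1) / log x ^ 2)) x := by
  have hdiv := (hasDerivAt_id' x).div (hasDerivAt_log (by linarith)) (log_pos hx).ne'
  simpa [mul_inv_cancel₀ (zero_lt_one.trans hx).ne'] using hdiv.const_mul c

/-- `η` solves the equation `η'(t) + η(t) / (2t) + b e^{-√2 η(t)} = 0` on `(-∞, -1]` with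
`η(-1) = 0`. It governs the common size of the gaps between consecutive interfaces; the interaction
strength `b` is an arbitrary constant in place of `β`. -/
structure SolvesGapODE (b : ℝ) (η : ℝ → ℝ) : Prop where
  differentiableAt : ∀ t ≤ -1, DifferentiableAt ℝ η t
  ode : ∀ t ≤ -1, deriv η t + η t / (2 * t) + b * exp (-√2 * η t) = 0
  map_neg_one : η (-1) = 0

/-- The exponential `e^{√2 η(-s)}` of the gap in the reversed time `s = -t`, for which the equation
of `η` becomes `u' = √2 b - u log u / (2s)`. -/
noncomputable def gapExp (η : ℝ → ℝ) (s : ℝ) : ℝ := exp (√2 * η (-s))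

lemma gapExp_pos (η : ℝ → ℝ) (s : ℝ) : 0 < gapExp η s := exp_pos _

lemma log_gapExp (η : ℝ → ℝ) (s : ℝ) : log (gapExp η s) = √2 * η (-s) := log_exp _

namespace SolvesGapODE

lemma gapExp_one (hη : SolvesGapODE b η) : gapExp η 1 = 1 := by
  simp [gapExp, hη.map_neg_one]

lemma hasDerivAt_gapExp (hη : SolvesGapODE b η) (hs : 1 ≤ s) :
    HasDerivAt (gapExp η) (√2 * b - gapExp η s * log (gapExp η s) / (2 * s)) s := by
  have hcomp : HasDerivAt (fun x => η (-x)) (deriv η (-s) * -1) s :=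
    (hη.differentiableAt (-s) (by linarith)).hasDerivAt.comp s (hasDerivAt_neg s)
  have hode := hη.ode (-s) (by linarith)
  rw [mul_neg, div_neg] at hode
  refine (hcomp.const_mul √2).exp.congr_deriv ?_
  have hinv : exp (√2 * η (-s)) * exp (-√2 * η (-s)) = 1 := by simp [← exp_add]
  rw [log_gapExp, gapExp]
  linear_combination -√2 * exp (√2 * η (-s)) * hode + √2 * b * hinv

lemma continuousOn_gapExp (hη : SolvesGapODE b η) : ContinuousOn (gapExp η) (Set.Ici 1) :=
  fun _ hx => (hη.hasDerivAt_gapExp hx).continuousAt.continuousWithinAt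

lemma one_le_gapExp (hb : 0 < b) (hη : SolvesGapODE b η) (hs : 1 ≤ s) : 1 ≤ gapExp η s := by
  refine image_le_of_deriv_right_lt_deriv_boundary' (f := fun _ => 1) (f' := fun _ => 0)
    continuousOn_const (fun x _ => hasDerivWithinAt_const x _ 1) hη.gapExp_one.ge
    (hη.continuousOn_gapExp.mono Set.Icc_subset_Ici_self)
    (fun x hx => (hη.hasDerivAt_gapExp hx.1).hasDerivWithinAt) (fun x _ hcontact => ?_)
    (Set.right_mem_Icc.mpr hs)
  simp [← hcontact, hb]

lemma nonneg (hb : 0 < b) (hη : SolvesGapODE b η) {t : ℝ} (ht : t ≤ -1) : 0 ≤ η t := by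
  have hlog := log_nonneg (hη.one_le_gapExp hb (le_neg_of_le_neg ht))
  rw [log_gapExp, neg_neg] at hlog
  exact nonneg_of_mul_nonneg_right hlog (by positivity)

lemma gapExp_le (hb : 0 < b) (hη : SolvesGapODE b η) (hs : 1 ≤ s) :
    gapExp η s ≤ 1 + √2 * b * (s - 1) := by
  refine image_le_of_deriv_right_le_deriv_boundary (B := fun s => 1 + √2 * b * (s - 1))
    (B' := fun _ => √2 * b) (hη.continuousOn_gapExp.mono Set.Icc_subset_Ici_self)
    (fun x hx => (hη.hasDerivAt_gapExp hx.1).hasDerivWithinAt) (by simp [hη.gapExp_one])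
    (by fun_prop) (fun x _ => ?_) (fun x hx => ?_) (Set.right_mem_Icc.mpr hs)
  · simpa using ((((hasDerivAt_id x).sub_const 1).const_mul (√2 * b)).const_add 1).hasDerivWithinAt
  · have hlog := log_nonneg (hη.one_le_gapExp hb hx.1)
    exact sub_le_self _ <| div_nonneg (mul_nonneg (gapExp_pos η x).le hlog) (by linarith [hx.1])

lemma exists_mul_div_log_le_gapExp (hb : 0 < b) (hη : SolvesGapODE b η) :
    ∃ c > 0, ∀ s ≥ 2, c * (s / log s) ≤ gapExp η s := by
  have hlog2 : 0 < log 2 := log_pos one_lt_two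
  refine ⟨min (√2 * b) (log 2 / 2), by positivity, fun s hs => ?_⟩
  set c := min (√2 * b) (log 2 / 2)
  have hc : 0 < c := by positivity
  have hcb : c ≤ √2 * b := min_le_left _ _
  have hclog : c ≤ log 2 / 2 := min_le_right _ _
  refine image_le_of_deriv_right_lt_deriv_boundary' (a := 2)
    (fun x hx => (hasDerivAt_mul_div_log c
      (one_lt_two.trans_le hx.1)).continuousAt.continuousWithinAt)
    (fun x hx => (hasDerivAt_mul_div_log c (one_lt_two.trans_le hx.1)).hasDerivWithinAt) ?_
    (hη.continuousOn_gapExp.mono fun x hx => one_le_two.trans hx.1)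
    (fun x hx => (hη.hasDerivAt_gapExp (one_le_two.trans hx.1)).hasDerivWithinAt)
    (fun x hx hcontact => ?_) (Set.right_mem_Icc.mpr hs)
  · calc c * (2 / log 2) ≤ log 2 / 2 * (2 / log 2) := by gcongr
      _ = 1 := by field_simp
      _ ≤ gapExp η 2 := hη.one_le_gapExp hb one_le_two
  · have hx0 : 0 < x := two_pos.trans_le hx.1
    have hlogx : log 2 ≤ log x := log_le_log two_pos hx.1
    have hlogx0 : 0 < log x := hlog2.trans_le hlogx
    have hlog_le : log (c * (x / log x)) ≤ log x :=
      log_le_log (by positivity) <| by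
        rw [← mul_div_assoc, div_le_iff₀ hlogx0, mul_comm]
        gcongr
        linarith
    have hbarrier : c * ((log x - 1) / log x ^ 2) ≤ c / 4 := by
      rw [div_eq_mul_inv c 4]
      gcongr
      rw [div_le_iff₀ (by positivity)]
      linarith [sq_nonneg (log x - 2)]
    have hdamping : c * (x / log x) * log (c * (x / log x)) / (2 * x) ≤ c / 2 :=
      calc c * (x / log x) * log (c * (x / log x)) / (2 * x)
          ≤ c * (x / log x) * log x / (2 * x) := by gcongr
        _ = c / 2 := by field_simp
    rw [← hcontact]
    linarith

lemma exists_exp_neg_le (hb : 0 < b) (hη : SolvesGapODE b η) :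
    ∃ K > 0, ∀ᶠ t in atBot, exp (-(√2 * η t)) ≤ K * (log |t| / |t|) := by
  obtain ⟨c, hc, hle⟩ := hη.exists_mul_div_log_le_gapExp hb
  refine ⟨c⁻¹, inv_pos.mpr hc, ?_⟩
  filter_upwards [eventually_le_atBot (-2)] with t ht
  have habs : |t| = -t := abs_of_nonpos (by linarith)
  have hlog : 0 < log |t| := log_pos (by linarith)
  have hgap := hle |t| (by linarith)
  rw [gapExp, habs, neg_neg, ← habs] at hgap
  calc exp (-(√2 * η t)) = (exp (√2 * η t))⁻¹ := exp_neg _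
    _ ≤ (c * (|t| / log |t|))⁻¹ := by
        have := abs_pos_of_neg (show t < 0 by linarith)
        gcongr
    _ = c⁻¹ * (log |t| / |t|) := by rw [mul_inv, inv_div]

lemma exists_exp_neg_mul_sub_le (hb : 0 < b) (hη : SolvesGapODE b η) {q : ℝ} (hq : 0 ≤ q) (G : ℝ) :
    ∃ K > 0, ∀ᶠ t in atBot, exp (-(q * (η t - G))) ≤ K * (log |t| / |t|) ^ (q / √2) := by
  obtain ⟨K, hK, hle⟩ := hη.exists_exp_neg_le hb
  refine ⟨exp (q * G) * K ^ (q / √2), by positivity, ?_⟩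
  filter_upwards [hle, eventually_le_atBot (-1)] with t ht ht1
  have hlog : 0 ≤ log |t| := log_nonneg (le_abs.mpr (.inr (by linarith)))
  calc exp (-(q * (η t - G))) = exp (q * G) * exp (-(√2 * η t)) ^ (q / √2) := by
        rw [← exp_mul, ← exp_add]
        congr 1
        field_simp
        ring
    _ ≤ exp (q * G) * (K * (log |t| / |t|)) ^ (q / √2) := by gcongr
    _ = exp (q * G) * K ^ (q / √2) * (log |t| / |t|) ^ (q / √2) := by
        rw [mul_rpow hK.le (by positivity), mul_assoc]

lemma tendsto_atBot_atTop (hb : 0 < b) (hη : SolvesGapODE b η) : Tendsto η atBot atTop := by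
  obtain ⟨K, -, hK⟩ := hη.exists_exp_neg_le hb
  have hlog : Tendsto (fun t : ℝ => K * (log |t| / |t|)) atBot (𝓝 0) := by
    simpa using ((isLittleO_log_id_atTop.tendsto_div_nhds_zero.comp
      tendsto_abs_atBot_atTop).const_mul K)
  have hexp := squeeze_zero' (.of_forall fun t => (exp_pos _).le) hK hlog
  have hlin : Tendsto (fun t => √2 * η t) atBot atTop := by
    simpa [Function.comp_def] using
      tendsto_neg_atBot_atTop.comp (tendsto_exp_comp_nhds_zero.mp hexp)
  exact (tendsto_const_mul_atTop_of_pos (by positivity)).mp hlin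

lemma isLittleO_sqrt (hb : 0 < b) (hη : SolvesGapODE b η) : η =o[atBot] fun t => √(-t) := by
  have hlog : (fun s => η (-s)) =O[atTop] log := by
    refine IsBigO.of_bound 2 ?_
    filter_upwards [eventually_ge_atTop 1, eventually_ge_atTop (√2 * b)] with s hs hsb
    have hgap : gapExp η s ≤ s ^ 2 := (hη.gapExp_le hb hs).trans (by nlinarith)
    have hη0 := hη.nonneg hb (neg_le_neg hs)
    rw [norm_of_nonneg hη0, norm_of_nonneg (log_nonneg hs)]
    calc η (-s) ≤ √2 * η (-s) := le_mul_of_one_le_left hη0 (one_le_sqrt.mpr one_le_two)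
      _ = log (gapExp η s) := (log_gapExp η s).symm
      _ ≤ log (s ^ 2) := log_le_log (gapExp_pos η s) hgap
      _ = 2 * log s := by simp
  have hsqrt : log =o[atTop] fun s => √s := by
    simpa only [sqrt_eq_rpow] using isLittleO_log_rpow_atTop one_half_pos
  simpa [Function.comp_def] using
    (hlog.trans_isLittleO hsqrt).comp_tendsto tendsto_neg_atBot_atTop

end SolvesGapODE

end GapODE

section GapWeight

variable {σ a b r : ℝ}

/-- The weight `e^{-σ max(|r - a|, |r - b|)}` of the gap between two interfaces at `a` and `b`. Each
exponential in the definition of `Φ` coincides, on the half of the gap where it is used, with the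
weight of that gap. -/
noncomputable def gapWeight (σ a b r : ℝ) : ℝ := exp (-(σ * max |r - a| |r - b|))

lemma gapWeight_pos (σ a b r : ℝ) : 0 < gapWeight σ a b r := exp_pos _

lemma gapWeight_of_midpoint_le (hab : a ≤ b) (hr : (a + b) / 2 ≤ r) :
    gapWeight σ a b r = exp (σ * (-r + a)) := by
  have hmax : max |r - a| |r - b| = r - a := by
    rw [abs_of_nonneg (by linarith), max_eq_left (abs_le.mpr ⟨by linarith, by linarith⟩)]
  rw [gapWeight, hmax]
  ring_nf

lemma gapWeight_of_le_midpoint (hab : a ≤ b) (hr : r ≤ (a + b) / 2) :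
    gapWeight σ a b r = exp (σ * (r - b)) := by
  have hmax : max |r - a| |r - b| = b - r := by
    rw [abs_of_nonpos (a := r - b) (by linarith),
      max_eq_right (abs_le.mpr ⟨by linarith, by linarith⟩), neg_sub]
  rw [gapWeight, hmax]
  ring_nf

lemma gapWeight_le_exp_midpoint {d : ℝ} (hσ : 0 ≤ σ) (hd : d ≤ b - a) :
    gapWeight σ a b r ≤ exp (-(σ / 2 * d)) * exp (-(σ * |r - (a + b) / 2|)) := by
  have hmax : d / 2 + |r - (a + b) / 2| ≤ max |r - a| |r - b| := by
    rcases abs_cases (r - (a + b) / 2) with ⟨h, -⟩ | ⟨h, -⟩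
    · exact le_max_of_le_left <| by linarith [le_abs_self (r - a)]
    · exact le_max_of_le_right <| by linarith [neg_le_abs (r - b)]
  rw [gapWeight, ← exp_add, exp_le_exp]
  linarith [mul_le_mul_of_nonneg_left hmax hσ]

lemma gapWeight_le_exp_of_notMem_Ioo {c d : ℝ} (hσ : 0 ≤ σ) (hd : d ≤ b - a)
    (hc : c ≤ a ∨ b ≤ c) :
    gapWeight σ a b r ≤ exp (-(σ * d)) * exp (σ * |r - c|) := by
  have hmax : d - |r - c| ≤ max |r - a| |r - b| := by
    rcases hc with hc | hc
    · exact le_max_of_le_right <| by linarith [neg_le_abs (r - b), le_abs_self (r - c)]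
    · exact le_max_of_le_left <| by linarith [le_abs_self (r - a), neg_le_abs (r - c)]
  rw [gapWeight, ← exp_add, exp_le_exp]
  linarith [mul_le_mul_of_nonneg_left hmax hσ]

end GapWeight

lemma le_or_exists_mem_Ioc_or_lt {α : Type*} [LinearOrder α] (m : ℕ → α) (r : α) {n : ℕ}
    (hn : 1 ≤ n) :
    r ≤ m 1 ∨ (∃ j ∈ Finset.Ico 1 n, r ∈ Set.Ioc (m j) (m (j + 1))) ∨ m n < r := by
  induction n, hn using Nat.le_induction with
  | base => simpa using le_or_gt r (m 1)
  | succ n hn ih =>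
    rcases ih with hle | ⟨j, hj, hr⟩ | hlt
    · exact .inl hle
    · exact .inr <| .inl ⟨j, Finset.Ico_subset_Ico_right n.le_succ hj, hr⟩
    · rcases le_or_gt r (m (n + 1)) with hle | hlt'
      · exact .inr <| .inl ⟨n, by simpa using hn, hlt, hle⟩
      · exact .inr <| .inr hlt'

lemma IsPhi.mem_Icc_sum_gapWeight {N k : ℕ} {η : ℝ → ℝ} {γ : ℕ → ℝ} {σ t r : ℝ}
    {Φ : ℝ → ℝ → ℝ} (hΦ : IsPhi N k η γ σ Φ) (hk : 2 ≤ k)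
    (hmono : MonotoneOn (fun i => rho0 N k η γ i t) (Set.Icc 1 k)) (hr : 1 < r) :
    Φ t r ∈ Set.Icc 0 (∑ i ∈ Finset.Ico 1 k,
      gapWeight σ (rho0 N k η γ i t) (rho0 N k η γ (i + 1) t) r) := by
  set ρ : ℕ → ℝ := fun i => rho0 N k η γ i t
  have hle : ∀ i ∈ Finset.Ico 1 k, ρ i ≤ ρ (i + 1) := fun i hi => by
    rw [Finset.mem_Ico] at hi
    exact hmono ⟨by omega, by omega⟩ ⟨by omega, by omega⟩ i.le_succ
  have hpos : ∀ i ∈ Finset.Ico 1 k, 0 ≤ gapWeight σ (ρ i) (ρ (i + 1)) r :=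
    fun i _ => (gapWeight_pos ..).le
  rcases le_or_exists_mem_Ioc_or_lt (fun i => (ρ i + ρ (i + 1)) / 2) r
    (show 1 ≤ k - 1 by omega) with hfirst | ⟨j, hj, hlow, hup⟩ | hlast
  · have h1 : 1 ∈ Finset.Ico 1 k := Finset.mem_Ico.mpr (by omega)
    rw [hΦ.1 t r hr hfirst, ← gapWeight_of_le_midpoint (hle 1 h1) hfirst]
    exact ⟨(gapWeight_pos ..).le, Finset.single_le_sum hpos h1⟩
  · rw [Finset.mem_Ico] at hj
    have hj0 : j ∈ Finset.Ico 1 k := Finset.mem_Ico.mpr (by omega)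
    have hj1 : j + 1 ∈ Finset.Ico 1 k := Finset.mem_Ico.mpr (by omega)
    rw [hΦ.2.1 t r (j + 1) (by omega) (by omega) (by rwa [add_comm]) hup, Nat.add_sub_cancel,
      ← gapWeight_of_midpoint_le (hle j hj0) hlow.le, ← gapWeight_of_le_midpoint (hle _ hj1) hup]
    exact ⟨(add_pos (gapWeight_pos ..) (gapWeight_pos ..)).le,
      Finset.add_le_sum hpos hj0 hj1 j.lt_succ_self.ne⟩
  · have hk1 : k - 1 ∈ Finset.Ico 1 k := Finset.mem_Ico.mpr (by omega)
    have hw := gapWeight_of_midpoint_le (σ := σ) (hle _ hk1) hlast.le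
    have hsum := Finset.single_le_sum hpos hk1
    rw [Nat.sub_add_cancel (by omega)] at hlast hw hsum
    rw [hΦ.2.2 t r (by rwa [add_comm]), ← hw]
    exact ⟨(gapWeight_pos ..).le, hsum⟩

section Separated

variable {k : ℕ} {ρ : ℕ → ℝ} {σ d : ℝ} {A : Set ℝ} {φ : ℝ → ℝ}

/-- The interface positions `ρ 1, …, ρ k` lie in `[1, ∞)` and are increasing, with consecutive gaps
of length at least `d ≥ 0`. -/
structure IsSeparated (k : ℕ) (ρ : ℕ → ℝ) (d : ℝ) : Prop where
  nonneg : 0 ≤ d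
  one_le_first : 1 ≤ ρ 1
  le_gap : ∀ i ∈ Finset.Ico 1 k, d ≤ ρ (i + 1) - ρ i

namespace IsSeparated

lemma monotoneOn (hρ : IsSeparated k ρ d) : MonotoneOn ρ (Set.Icc 1 k) :=
  monotoneOn_of_le_add_one Set.ordConnected_Icc fun i _ hi hi' => by
    linarith [hρ.nonneg, hρ.le_gap i (Finset.mem_Ico.mpr ⟨hi.1, hi'.2⟩)]

lemma one_le (hρ : IsSeparated k ρ d) {i : ℕ} (hi : i ∈ Finset.Icc 1 k) : 1 ≤ ρ i := by
  rw [Finset.mem_Icc] at hi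
  exact hρ.one_le_first.trans (hρ.monotoneOn ⟨le_rfl, hi.1.trans hi.2⟩ hi hi.1)

lemma setIntegral_pow_mul_le (hρ : IsSeparated k ρ d) (hσ : 0 < σ) (hA : MeasurableSet A)
    (hA0 : ∀ r ∈ A, 0 ≤ r)
    (hφ : ∀ r ∈ A, φ r ∈ Set.Icc 0 (∑ i ∈ Finset.Ico 1 k, gapWeight σ (ρ i) (ρ (i + 1)) r))
    (ℓ : ℕ) :
    ∫ r in A, r ^ ℓ * φ r ≤
      expMoment σ ℓ * (exp (-(σ / 2 * d)) * ∑ i ∈ Finset.Icc 1 k, ρ i ^ ℓ) := by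
  have hmid : ∀ i ∈ Finset.Ico 1 k, 1 ≤ ρ i ∧ (ρ i + ρ (i + 1)) / 2 ∈ Set.Icc (ρ i) (ρ (i + 1)) :=
    fun i hi => ⟨hρ.one_le (Finset.Ico_subset_Icc_self hi),
      by linarith [hρ.nonneg, hρ.le_gap i hi], by linarith [hρ.nonneg, hρ.le_gap i hi]⟩
  have hsum : ∑ i ∈ Finset.Ico 1 k, ((ρ i + ρ (i + 1)) / 2) ^ ℓ ≤ ∑ i ∈ Finset.Icc 1 k, ρ i ^ ℓ :=
    calc ∑ i ∈ Finset.Ico 1 k, ((ρ i + ρ (i + 1)) / 2) ^ ℓ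
        ≤ ∑ i ∈ Finset.Ico 1 k, ρ (i + 1) ^ ℓ := Finset.sum_le_sum fun i hi =>
          pow_le_pow_left₀ (by linarith [hmid i hi |>.1, hmid i hi |>.2.1]) (hmid i hi).2.2 ℓ
      _ = ∑ i ∈ Finset.Ico 2 (k + 1), ρ i ^ ℓ := Finset.sum_Ico_add' (fun i => ρ i ^ ℓ) 1 k 1
      _ ≤ ∑ i ∈ Finset.Icc 1 k, ρ i ^ ℓ := Finset.sum_le_sum_of_subset_of_nonneg
          (fun i hi => by simp only [Finset.mem_Ico, Finset.mem_Icc] at *; omega)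
          fun i hi _ => pow_nonneg (zero_le_one.trans (hρ.one_le hi)) ℓ
  calc ∫ r in A, r ^ ℓ * φ r
      ≤ expMoment σ ℓ * ∑ i ∈ Finset.Ico 1 k,
          exp (-(σ / 2 * d)) * ((ρ i + ρ (i + 1)) / 2) ^ ℓ :=
        setIntegral_pow_mul_le_of_le_sum_exp hσ hA hA0 (fun _ _ => (exp_pos _).le)
          (fun i hi => (hmid i hi).1.trans (hmid i hi).2.1)
          (fun r hr => ⟨(hφ r hr).1, (hφ r hr).2.trans <| Finset.sum_le_sum fun i hi =>
            gapWeight_le_exp_midpoint hσ.le (hρ.le_gap i hi)⟩) ℓ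
    _ ≤ expMoment σ ℓ * (exp (-(σ / 2 * d)) * ∑ i ∈ Finset.Icc 1 k, ρ i ^ ℓ) := by
        rw [← Finset.mul_sum]
        gcongr
        exact expMoment_nonneg σ ℓ

lemma sum_gapWeight_le (hρ : IsSeparated k ρ d) (hσ : 0 ≤ σ) {j : ℕ} (hj : j ∈ Finset.Icc 1 k)
    (r : ℝ) :
    ∑ i ∈ Finset.Ico 1 k, gapWeight σ (ρ i) (ρ (i + 1)) r ≤
      k * (exp (-(σ * d)) * exp (σ * |r - ρ j|)) := by
  rw [Finset.mem_Icc] at hj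
  have hterm : ∀ i ∈ Finset.Ico 1 k,
      gapWeight σ (ρ i) (ρ (i + 1)) r ≤ exp (-(σ * d)) * exp (σ * |r - ρ j|) := fun i hi => by
    refine gapWeight_le_exp_of_notMem_Ioo hσ (hρ.le_gap i hi) ?_
    rw [Finset.mem_Ico] at hi
    rcases le_or_gt j i with hji | hij
    · exact .inl (hρ.monotoneOn hj ⟨hi.1, hi.2.le⟩ hji)
    · exact .inr (hρ.monotoneOn ⟨by omega, hi.2⟩ hj hij)
  calc ∑ i ∈ Finset.Ico 1 k, gapWeight σ (ρ i) (ρ (i + 1)) r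
      ≤ (k - 1 : ℕ) * (exp (-(σ * d)) * exp (σ * |r - ρ j|)) := by
        simpa using Finset.sum_le_card_nsmul _ _ _ hterm
    _ ≤ k * (exp (-(σ * d)) * exp (σ * |r - ρ j|)) := by
        gcongr
        exact k.sub_le 1

lemma setIntegral_pow_mul_mul_le (hρ : IsSeparated k ρ d) (hσ : 0 ≤ σ) (hA : MeasurableSet A)
    (hA0 : ∀ r ∈ A, 0 ≤ r)
    (hφ : ∀ r ∈ A, φ r ∈ Set.Icc 0 (∑ i ∈ Finset.Ico 1 k, gapWeight σ (ρ i) (ρ (i + 1)) r))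
    {j : ℕ} (hj : j ∈ Finset.Icc 1 k) {g : ℝ → ℝ} {M a : ℝ} (hσa : σ < a) (hM : 0 ≤ M)
    (hg : ∀ r ∈ A, g r ∈ Set.Icc 0 (M * exp (-(a * |r - ρ j|)))) (ℓ : ℕ) :
    ∫ r in A, r ^ ℓ * φ r * g r ≤
      expMoment (a - σ) ℓ * (k * M * exp (-(σ * d)) * ρ j ^ ℓ) := by
  have hbound : ∀ r ∈ A, φ r * g r ≤ k * M * exp (-(σ * d)) * exp (-((a - σ) * |r - ρ j|)) :=
    fun r hr =>
    calc φ r * g r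
        ≤ k * (exp (-(σ * d)) * exp (σ * |r - ρ j|)) * (M * exp (-(a * |r - ρ j|))) :=
          mul_le_mul ((hφ r hr).2.trans (hρ.sum_gapWeight_le hσ hj r)) (hg r hr).2 (hg r hr).1
            (by positivity)
      _ = k * M * exp (-(σ * d)) * exp (σ * |r - ρ j| + -(a * |r - ρ j|)) := by
          rw [exp_add]
          ring
      _ = k * M * exp (-(σ * d)) * exp (-((a - σ) * |r - ρ j|)) := by ring_nf
  simpa only [mul_assoc, Finset.sum_singleton] using
    setIntegral_pow_mul_le_of_le_sum_exp (s := {j}) (m := ρ) (φ := fun r => φ r * g r)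
      (E := fun _ => k * M * exp (-(σ * d))) (sub_pos.mpr hσa) hA hA0
      (fun _ _ => by positivity) (by simpa using hρ.one_le hj)
      (fun r hr => ⟨mul_nonneg (hφ r hr).1 (hg r hr).1, by simpa using hbound r hr⟩) ℓ

end IsSeparated

end Separated

section Interfaces

variable {N k : ℕ} {b : ℝ} {η : ℝ → ℝ} {σ : ℝ} {Φ : ℝ → ℝ → ℝ} {γ : ℕ → ℝ}

lemma SolvesGapODE.exists_isSeparated_rho0 (hb : 0 < b) (hη : SolvesGapODE b η) (hN : 2 ≤ N)
    (k : ℕ) (γ : ℕ → ℝ) :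
    ∃ G, ∀ᶠ t in atBot, IsSeparated k (fun i => rho0 N k η γ i t) (η t - G) := by
  have hsqrt : Tendsto (fun t : ℝ => √(-t)) atBot atTop :=
    tendsto_sqrt_atTop.comp tendsto_neg_atBot_atTop
  have hlower : (fun t => (1 - ((k : ℝ) + 1) / 2) * η t + γ 1) =o[atBot] fun t => √(-t) :=
    ((hη.isLittleO_sqrt hb).const_mul_left _).add
      (isLittleO_const_left.mpr <| .inr <| tendsto_norm_atTop_atTop.comp hsqrt)
  refine ⟨∑ i ∈ Finset.Ico 1 k, |γ (i + 1) - γ i|, ?_⟩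
  filter_upwards [(hη.tendsto_atBot_atTop hb).eventually_ge_atTop _,
    hsqrt.eventually_ge_atTop 2, hlower.bound one_half_pos, eventually_le_atBot 0]
    with t hηG hsqrt2 hsmall ht
  refine ⟨sub_nonneg.mpr hηG, ?_, fun i hi => ?_⟩
  · have hN2 : (2 : ℝ) ≤ N := by exact_mod_cast hN
    have hradius : √(-t) ≤ √(-2 * ((N : ℝ) - 1) * t) := sqrt_le_sqrt (by nlinarith)
    rw [norm_eq_abs, norm_of_nonneg (sqrt_nonneg _)] at hsmall
    rw [rho0, Nat.cast_one]
    linarith [(abs_le.mp hsmall).1]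
  · have hγ := Finset.single_le_sum (f := fun i => |γ (i + 1) - γ i|) (fun i _ => abs_nonneg _) hi
    simp only [rho0, Nat.cast_add, Nat.cast_one]
    linarith [neg_abs_le (γ (i + 1) - γ i)]

lemma IsPhi.eventually_integral_pow_mul_le (hΦ : IsPhi N k η γ σ Φ) (hN : 2 ≤ N) (hk : 2 ≤ k)
    (hb : 0 < b) (hη : SolvesGapODE b η) (hσ : 0 < σ) (ℓ : ℕ) :
    ∀ᶠ C in atTop, ∀ᶠ t in atBot, ∫ r in Set.Ioi 1, r ^ ℓ * Φ t r ≤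
      C * ∑ i ∈ Finset.Icc 1 k, rho0 N k η γ i t ^ ℓ * (log |t| / |t|) ^ (σ / (2 * √2)) := by
  obtain ⟨G, hsep⟩ := hη.exists_isSeparated_rho0 hb hN k γ
  obtain ⟨K, -, hK⟩ := hη.exists_exp_neg_mul_sub_le hb (half_pos hσ).le G
  filter_upwards [eventually_ge_atTop (expMoment σ ℓ * K)] with C hC
  filter_upwards [hsep, hK, eventually_le_atBot (-1)] with t ht hKt ht1
  have hsum : 0 ≤ ∑ i ∈ Finset.Icc 1 k, rho0 N k η γ i t ^ ℓ :=
    Finset.sum_nonneg fun i hi => pow_nonneg (zero_le_one.trans (ht.one_le hi)) ℓ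
  have hlog : 0 ≤ log |t| := log_nonneg (le_abs.mpr (.inr (by linarith)))
  calc ∫ r in Set.Ioi 1, r ^ ℓ * Φ t r
      ≤ expMoment σ ℓ * (exp (-(σ / 2 * (η t - G))) * ∑ i ∈ Finset.Icc 1 k, rho0 N k η γ i t ^ ℓ) :=
        ht.setIntegral_pow_mul_le hσ measurableSet_Ioi (fun r hr => zero_le_one.trans hr.le)
          (fun r hr => hΦ.mem_Icc_sum_gapWeight hk ht.monotoneOn hr) ℓ
    _ ≤ expMoment σ ℓ * (K * (log |t| / |t|) ^ (σ / 2 / √2) *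
          ∑ i ∈ Finset.Icc 1 k, rho0 N k η γ i t ^ ℓ) := by
        gcongr
        exact expMoment_nonneg σ ℓ
    _ = expMoment σ ℓ * K * ∑ i ∈ Finset.Icc 1 k,
          rho0 N k η γ i t ^ ℓ * (log |t| / |t|) ^ (σ / (2 * √2)) := by
        rw [div_div, ← Finset.sum_mul]
        ring
    _ ≤ C * ∑ i ∈ Finset.Icc 1 k, rho0 N k η γ i t ^ ℓ * (log |t| / |t|) ^ (σ / (2 * √2)) := by
        rw [← Finset.sum_mul]
        gcongr

lemma IsPhi.eventually_integral_pow_mul_mul_w1_le (hΦ : IsPhi N k η γ σ Φ) (hN : 2 ≤ N)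
    (hk : 2 ≤ k) (hb : 0 < b) (hη : SolvesGapODE b η) (hσ : σ ∈ Set.Ioo 0 √2) {h : ℕ → ℝ → ℝ}
    {A : ℝ} (hh : ∀ᶠ t in atBot, ∀ j ∈ Finset.Icc 1 k, |h j t| ≤ A) (ℓ : ℕ) :
    ∀ᶠ C in atTop, ∀ᶠ t in atBot, ∀ j ∈ Finset.Icc 1 k,
      ∫ r in Set.Ioi 1, r ^ ℓ * Φ t r * w1 (r - rho N k η γ h j t) ≤
        C * rho0 N k η γ j t ^ ℓ * (log |t| / |t|) ^ (σ / √2) := by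
  obtain ⟨G, hsep⟩ := hη.exists_isSeparated_rho0 hb hN k γ
  obtain ⟨K, -, hK⟩ := hη.exists_exp_neg_mul_sub_le hb hσ.1.le G
  set M := 4 * exp (√2 * A)
  filter_upwards [eventually_ge_atTop (expMoment (√2 - σ) ℓ * (k * M * K))] with C hC
  filter_upwards [hsep, hK, hh, eventually_le_atBot (-1)] with t ht hKt hht ht1 j hj
  have hρ : 0 ≤ rho0 N k η γ j t := zero_le_one.trans (ht.one_le hj)
  have hlog : 0 ≤ log |t| := log_nonneg (le_abs.mpr (.inr (by linarith)))
  have hw1 (r : ℝ) : w1 (r - rho N k η γ h j t) ∈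
      Set.Icc 0 (M * exp (-(√2 * |r - rho0 N k η γ j t|))) := by
    rw [rho, ← sub_sub]
    exact ⟨(w1_pos _).le, w1_sub_le_exp (hht j hj) _⟩
  calc ∫ r in Set.Ioi 1, r ^ ℓ * Φ t r * w1 (r - rho N k η γ h j t)
      ≤ expMoment (√2 - σ) ℓ * (k * M * exp (-(σ * (η t - G))) * rho0 N k η γ j t ^ ℓ) :=
        ht.setIntegral_pow_mul_mul_le hσ.1.le measurableSet_Ioi
          (fun r hr => zero_le_one.trans hr.le)
          (fun r hr => hΦ.mem_Icc_sum_gapWeight hk ht.monotoneOn hr) hj hσ.2 (by positivity)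
          (fun r _ => hw1 r) ℓ
    _ ≤ expMoment (√2 - σ) ℓ *
          (k * M * (K * (log |t| / |t|) ^ (σ / √2)) * rho0 N k η γ j t ^ ℓ) := by
        gcongr
        exact expMoment_nonneg _ ℓ
    _ = expMoment (√2 - σ) ℓ * (k * M * K) * rho0 N k η γ j t ^ ℓ *
          (log |t| / |t|) ^ (σ / √2) := by ring
    _ ≤ C * rho0 N k η γ j t ^ ℓ * (log |t| / |t|) ^ (σ / √2) := by gcongr

end Interfaces

theorem stmt_9_general {N k : ℕ} (hN : 2 ≤ N) (hk : 2 ≤ k) {b : ℝ} (hb : 0 < b) {η : ℝ → ℝ}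
    (hη : SolvesGapODE b η) (γ : ℕ → ℝ) {σ : ℝ} (hσ : σ ∈ Set.Ioo 0 √2) (ℓ : ℕ)
    {h : ℕ → ℝ → ℝ} {A : ℝ} (hh : ∀ᶠ t in atBot, ∀ j ∈ Finset.Icc 1 k, |h j t| ≤ A)
    {Φ : ℝ → ℝ → ℝ} (hΦ : IsPhi N k η γ σ Φ) :
    ∃ T₀ > (2 : ℝ), ∃ C > (0 : ℝ), ∀ t ≤ -T₀,
      (∫ r in Set.Ioi (1 : ℝ), r ^ ℓ * Φ t r) ≤
        C * ∑ i ∈ Finset.Icc 1 k,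
          rho0 N k η γ i t ^ ℓ * (log |t| / |t|) ^ (σ / (2 * √2)) ∧
      ∀ j ∈ Finset.Icc 1 k,
        (∫ r in Set.Ioi (1 : ℝ), r ^ ℓ * Φ t r * w1 (r - rho N k η γ h j t)) ≤
          C * rho0 N k η γ j t ^ ℓ * (log |t| / |t|) ^ (σ / √2) := by
  obtain ⟨C, ⟨hint, hintw⟩, hC⟩ := ((hΦ.eventually_integral_pow_mul_le hN hk hb hη hσ.1 ℓ).and
    (hΦ.eventually_integral_pow_mul_mul_w1_le hN hk hb hη hσ hh ℓ)).and
    (eventually_gt_atTop 0) |>.exists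
  obtain ⟨T, hT⟩ := eventually_atBot.mp (hint.and hintw)
  exact ⟨max 3 (-T), lt_max_of_lt_left (by norm_num), C, hC, fun t ht =>
    hT t (by linarith [le_max_right 3 (-T)])⟩

/-- Weighted integral estimates for `Φ`: for `σ ∈ (0,√2)`, `T₀ > 2` large enough and `ℓ ≥ 0`
there is `C > 0` with `∫_1^∞ r^ℓ Φ(t,r) dr ≤ C ∑_i (ρ_i⁰(t))^ℓ (log|t|/|t|)^{σ/(2√2)}` and
`∫_1^∞ r^ℓ Φ(t,r) w'(r-ρ_j(t)) dr ≤ C (ρ_j⁰(t))^ℓ (log|t|/|t|)^{σ/√2}`. -/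
theorem stmt_9 (N k : ℕ) (η : ℝ → ℝ) (γ : ℕ → ℝ) (S : Setting N k η γ)
    (σ : ℝ) (hσ : σ ∈ Set.Ioo 0 (Real.sqrt 2)) (ℓ : ℕ)
    (h : ℕ → ℝ → ℝ) (hh : SmallH k 2 h)
    (Φ : ℝ → ℝ → ℝ) (hΦ : IsPhi N k η γ σ Φ) :
    ∃ T₀ > (2 : ℝ), ∃ C > (0 : ℝ), ∀ t ≤ -T₀,
      ((∫ r in Set.Ioi (1 : ℝ), r ^ ℓ * Φ t r) ≤
        C * ∑ i ∈ Finset.Icc 1 k,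
          rho0 N k η γ i t ^ ℓ * (Real.log |t| / |t|) ^ (σ / (2 * Real.sqrt 2))) ∧
      ∀ j ∈ Finset.Icc 1 k,
        (∫ r in Set.Ioi (1 : ℝ), r ^ ℓ * Φ t r * w1 (r - rho N k η γ h j t)) ≤
          C * rho0 N k η γ j t ^ ℓ * (Real.log |t| / |t|) ^ (σ / Real.sqrt 2) := by
  obtain ⟨-, A, -, -, hA, -⟩ := hh
  exact stmt_9_general S.hN S.hk β_pos ⟨S.hηdiff, S.hηode, S.hηinit⟩ γ hσ ℓ
    (eventually_atBot.mpr ⟨-2, fun t ht j hj => hA j hj t ht⟩) hΦ
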